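/- For all nonnegative integers i, j, k, the three-dimensional Dubiner function φ_{(i,j,k)}(ξ₁,ξ₂,ξ₃) = P_i^{0,0}(η₁) · ((1−η₂)/2)^i P_j^{2i+1,0}(η₂) · ((1−η₃)/2)^{i+j} P_k^{2i+2j+1,0}(η₃), defined on the interior of the reference tetrahedron T³ via the collapsed coordinates η₁ = (−1+2ξ₁+ξ₂+ξ₃)/(1−ξ₂−ξ₃), η₂ = (−1+2ξ₂+ξ₃)/(1−ξ₃), η₃ = −1+2ξ₃, agrees there with a polynomial in the three variables (ξ₁,ξ₂,ξ₃) of total degree at most i+j+k. -/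

import Mathlib

/-- The Jacobi polynomial `P_n^{a,b}` (nonnegative integer parameters `a`, `b`), defined
through the Rodrigues formula. -/
noncomputable def jacobiP (n a b : ℕ) (x : ℝ) : ℝ :=
  ((-1 : ℝ) ^ n / (2 ^ n * n.factorial)) * (1 - x) ^ (-(a : ℤ)) * (1 + x) ^ (-(b : ℤ)) *
    iteratedDeriv n (fun y : ℝ => (1 - y) ^ (n + a) * (1 + y) ^ (n + b)) x

/-- The three-dimensional Dubiner basis function with indices `(i, j, k)`, given in the
collapsed coordinates `η₁ = (-1+2ξ₁+ξ₂+ξ₃)/(1-ξ₂-ξ₃)`, `η₂ = (-1+2ξ₂+ξ₃)/(1-ξ₃)`,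
`η₃ = -1+2ξ₃`. -/
noncomputable def dubiner3 (i j k : ℕ) (ξ : ℝ × ℝ × ℝ) : ℝ :=
  let η1 : ℝ := (-1 + 2 * ξ.1 + ξ.2.1 + ξ.2.2) / (1 - ξ.2.1 - ξ.2.2)
  let η2 : ℝ := (-1 + 2 * ξ.2.1 + ξ.2.2) / (1 - ξ.2.2)
  let η3 : ℝ := -1 + 2 * ξ.2.2
  jacobiP i 0 0 η1 * (((1 - η2) / 2) ^ i * jacobiP j (2 * i + 1) 0 η2) *
    (((1 - η3) / 2) ^ (i + j) * jacobiP k (2 * i + 2 * j + 1) 0 η3)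

/-!
By Leibniz' rule, the Rodrigues formula becomes
`P_n^{a,b}(x) = ∑_{i+j=n} C(n+a,i) C(n+b,j) ((x+1)/2)^i ((x-1)/2)^j`,
a form of degree `n` in `(x+1)/2` and `(x-1)/2`. For `x = η₁` these two quantities have the common
denominator `1-ξ₂-ξ₃` and numerators `ξ₁`, `ξ₁+ξ₂+ξ₃-1`; for `x = η₂` they have denominator `1-ξ₃`
and numerators `ξ₂`, `ξ₂+ξ₃-1`. Since `(1-η₂)/2 = (1-ξ₂-ξ₃)/(1-ξ₃)` and `(1-η₃)/2 = 1-ξ₃`, the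
powers in the Dubiner function are exactly the ones that clear these denominators.
-/

section JacobiForm

open Finset.HasAntidiagonal (antidiagonal mem_antidiagonal)

/-- The form `∑_{i+j=n} C(n+a,i) C(n+b,j) s^i t^j` of degree `n`, the homogenization of the Jacobi
polynomial: `P_n^{a,b}(x)` is its value at `s = (x+1)/2`, `t = (x-1)/2`. The arguments range over an
arbitrary commutative semiring, so that they may be numbers or polynomials. -/
def jacobiForm {R : Type*} [CommSemiring R] (n a b : ℕ) (s t : R) : R :=
  ∑ ij ∈ antidiagonal n,
    ((n + a).choose ij.1 * (n + b).choose ij.2 : ℕ) * (s ^ ij.1 * t ^ ij.2)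

theorem map_jacobiForm {R S F : Type*} [CommSemiring R] [CommSemiring S] [FunLike F R S]
    [RingHomClass F R S] (f : F) (n a b : ℕ) (s t : R) :
    f (jacobiForm n a b s t) = jacobiForm n a b (f s) (f t) := by
  simp only [jacobiForm, map_sum, map_mul, map_pow, map_natCast]

theorem jacobiForm_mul_mul {R : Type*} [CommSemiring R] (n a b : ℕ) (c s t : R) :
    jacobiForm n a b (c * s) (c * t) = c ^ n * jacobiForm n a b s t := by
  rw [jacobiForm, jacobiForm, Finset.mul_sum]
  refine Finset.sum_congr rfl fun ij hij => ?_
  rw [← mem_antidiagonal.1 hij]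
  ring

theorem jacobiForm_div_div {K : Type*} [Semifield K] (n a b : ℕ) (s t c : K) :
    jacobiForm n a b (s / c) (t / c) = jacobiForm n a b s t / c ^ n := by
  simpa only [div_eq_inv_mul, inv_pow] using jacobiForm_mul_mul n a b c⁻¹ s t

theorem totalDegree_jacobiForm_le {σ R : Type*} [CommSemiring R] (n a b : ℕ) {d : ℕ}
    {s t : MvPolynomial σ R} (hs : s.totalDegree ≤ d) (ht : t.totalDegree ≤ d) :
    (jacobiForm n a b s t).totalDegree ≤ n * d := by
  refine MvPolynomial.totalDegree_finsetSum_le fun ij hij => ?_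
  rw [← nsmul_eq_mul]
  calc (_ • (s ^ ij.1 * t ^ ij.2)).totalDegree
      ≤ (s ^ ij.1 * t ^ ij.2).totalDegree := MvPolynomial.totalDegree_smul_le _ _
    _ ≤ (s ^ ij.1).totalDegree + (t ^ ij.2).totalDegree := MvPolynomial.totalDegree_mul _ _
    _ ≤ ij.1 * s.totalDegree + ij.2 * t.totalDegree :=
        add_le_add (MvPolynomial.totalDegree_pow _ _) (MvPolynomial.totalDegree_pow _ _)
    _ ≤ ij.1 * d + ij.2 * d := by gcongr
    _ = n * d := by rw [← add_mul, mem_antidiagonal.1 hij]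

variable {𝕜 : Type*} [NontriviallyNormedField 𝕜]

theorem iteratedDeriv_one_add_pow (m k : ℕ) (x : 𝕜) :
    iteratedDeriv k (fun y : 𝕜 => (1 + y) ^ m) x = m.descFactorial k * (1 + x) ^ (m - k) := by
  rw [← iteratedDeriv_pow]
  exact congrFun (iteratedDeriv_comp_const_add k (· ^ m) 1) x

theorem iteratedDeriv_one_sub_pow (m k : ℕ) (x : 𝕜) :
    iteratedDeriv k (fun y : 𝕜 => (1 - y) ^ m) x =
      (-1) ^ k * (m.descFactorial k * (1 - x) ^ (m - k)) := by
  rw [← iteratedDeriv_pow]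
  exact congrFun (iteratedDeriv_comp_const_sub k (· ^ m) 1) x

theorem iteratedDeriv_one_sub_pow_mul_one_add_pow (n a b : ℕ) (x : 𝕜) :
    iteratedDeriv n (fun y : 𝕜 => (1 - y) ^ (n + a) * (1 + y) ^ (n + b)) x =
      n.factorial * ((1 - x) ^ a * (1 + x) ^ b) * jacobiForm n a b (-(1 + x)) (1 - x) := by
  rw [iteratedDeriv_fun_mul (by fun_prop) (by fun_prop), jacobiForm, Finset.mul_sum,
    ← Finset.Nat.sum_antidiagonal_eq_sum_range_succ (fun i j => (n.choose i : 𝕜) *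
      iteratedDeriv i (fun y : 𝕜 => (1 - y) ^ (n + a)) x *
      iteratedDeriv j (fun y : 𝕜 => (1 + y) ^ (n + b)) x)]
  refine Finset.sum_congr rfl fun ⟨i, j⟩ hij => ?_
  obtain rfl : i + j = n := mem_antidiagonal.1 hij
  have h_factorial : (((i + j).choose i * i.factorial * j.factorial : ℕ) : 𝕜) =
      ((i + j).factorial : ℕ) := by
    rw [Nat.choose_symm_add, Nat.add_choose_mul_factorial_mul_factorial]
  have h_sub : i + j + a - i = a + j := by omega
  have h_add : i + j + b - j = b + i := by omega
  rw [iteratedDeriv_one_sub_pow, iteratedDeriv_one_add_pow, h_sub, h_add, ← h_factorial,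
    Nat.descFactorial_eq_factorial_mul_choose, Nat.descFactorial_eq_factorial_mul_choose,
    neg_pow (1 + x)]
  push_cast
  ring

end JacobiForm

theorem jacobiP_eq_jacobiForm (n : ℕ) {a b : ℕ} {x : ℝ} (ha : (1 - x) ^ a ≠ 0)
    (hb : (1 + x) ^ b ≠ 0) :
    jacobiP n a b x = jacobiForm n a b ((x + 1) / 2) ((x - 1) / 2) := by
  have h_scale : jacobiForm n a b ((x + 1) / 2) ((x - 1) / 2) =
      (-1 / 2) ^ n * jacobiForm n a b (-(1 + x)) (1 - x) := by
    rw [← jacobiForm_mul_mul]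
    congr 1 <;> ring
  rw [jacobiP, iteratedDeriv_one_sub_pow_mul_one_add_pow, h_scale, zpow_neg, zpow_neg,
    zpow_natCast, zpow_natCast, div_pow]
  field_simp

/-- The collapsed coordinates have the shape `(2s-v)/v`: take `s = ξ₁`, `v = 1-ξ₂-ξ₃` for `η₁`,
`s = ξ₂`, `v = 1-ξ₃` for `η₂` and `s = ξ₃`, `v = 1` for `η₃`. -/
theorem jacobiP_two_mul_sub_div (n : ℕ) {a b : ℕ} {s v : ℝ} (hv : v ≠ 0)
    (ha : (v - s) ^ a ≠ 0) (hb : s ^ b ≠ 0) :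
    jacobiP n a b ((2 * s - v) / v) = jacobiForm n a b s (s - v) / v ^ n := by
  have h_one_sub : 1 - (2 * s - v) / v = 2 / v * (v - s) := by field_simp; ring
  have h_one_add : 1 + (2 * s - v) / v = 2 / v * s := by field_simp; ring
  have h_scale : 2 / v ≠ 0 := div_ne_zero two_ne_zero hv
  rw [jacobiP_eq_jacobiForm, ← jacobiForm_div_div]
  · congr 1 <;> field_simp <;> ring
  · rw [h_one_sub, mul_pow]
    exact mul_ne_zero (pow_ne_zero _ h_scale) ha
  · rw [h_one_add, mul_pow]
    exact mul_ne_zero (pow_ne_zero _ h_scale) hb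

theorem dubiner3_eq_jacobiForm_mul (i j k : ℕ) {x y z : ℝ} (hz : z ≠ 1) (hyz : y + z ≠ 1) :
    dubiner3 i j k (x, y, z) =
      jacobiForm i 0 0 x (x + y + z - 1) * jacobiForm j (2 * i + 1) 0 y (y + z - 1) *
        jacobiForm k (2 * i + 2 * j + 1) 0 z (z - 1) := by
  have hv₂ : 1 - z ≠ 0 := sub_ne_zero.2 hz.symm
  have hv₁ : 1 - z - y ≠ 0 := by
    rw [sub_sub, add_comm]
    exact sub_ne_zero.2 hyz.symm
  have hη₁ : (-1 + 2 * x + y + z) / (1 - y - z) = (2 * x - (1 - z - y)) / (1 - z - y) := by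
    congr 1 <;> ring
  have hη₂ : (-1 + 2 * y + z) / (1 - z) = (2 * y - (1 - z)) / (1 - z) := by
    congr 1; ring
  have hη₃ : -1 + 2 * z = (2 * z - 1) / 1 := by ring
  have hw₂ : (1 - (2 * y - (1 - z)) / (1 - z)) / 2 = (1 - z - y) / (1 - z) := by
    field_simp; ring
  have hw₃ : (1 - (2 * z - 1) / 1) / 2 = 1 - z := by ring
  have ht₁ : x - (1 - z - y) = x + y + z - 1 := by ring
  have ht₂ : y - (1 - z) = y + z - 1 := by ring
  simp only [dubiner3]
  rw [hη₁, hη₂, hη₃, hw₂, hw₃, jacobiP_two_mul_sub_div i hv₁ (by simp) (by simp),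
    jacobiP_two_mul_sub_div j hv₂ (pow_ne_zero _ hv₁) (by simp),
    jacobiP_two_mul_sub_div k one_ne_zero (pow_ne_zero _ hv₂) (by simp), ht₁, ht₂, div_pow,
    one_pow, pow_add]
  field_simp

theorem dubiner3_is_polynomial_general (i j k : ℕ) :
    ∃ q : MvPolynomial (Fin 3) ℝ, q.totalDegree ≤ i + j + k ∧
      ∀ ξ : ℝ × ℝ × ℝ, ξ.2.2 ≠ 1 → ξ.2.1 + ξ.2.2 ≠ 1 →
        MvPolynomial.eval ![ξ.1, ξ.2.1, ξ.2.2] q = dubiner3 i j k ξ := by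
  let X : Fin 3 → MvPolynomial (Fin 3) ℝ := MvPolynomial.X
  have hX (m : Fin 3) : (X m).totalDegree ≤ 1 := (MvPolynomial.totalDegree_X m).le
  have hsub_one {p : MvPolynomial (Fin 3) ℝ} (hp : p.totalDegree ≤ 1) :
      (p - 1).totalDegree ≤ 1 :=
    (MvPolynomial.totalDegree_sub_C_le p 1).trans hp
  have hadd {p q : MvPolynomial (Fin 3) ℝ} (hp : p.totalDegree ≤ 1) (hq : q.totalDegree ≤ 1) :
      (p + q).totalDegree ≤ 1 :=
    (MvPolynomial.totalDegree_add p q).trans (max_le hp hq)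
  let q₁ := jacobiForm i 0 0 (X 0) (X 0 + X 1 + X 2 - 1)
  let q₂ := jacobiForm j (2 * i + 1) 0 (X 1) (X 1 + X 2 - 1)
  let q₃ := jacobiForm k (2 * i + 2 * j + 1) 0 (X 2) (X 2 - 1)
  have hq₁ : q₁.totalDegree ≤ i * 1 :=
    totalDegree_jacobiForm_le _ _ _ (hX 0) (hsub_one (hadd (hadd (hX 0) (hX 1)) (hX 2)))
  have hq₂ : q₂.totalDegree ≤ j * 1 :=
    totalDegree_jacobiForm_le _ _ _ (hX 1) (hsub_one (hadd (hX 1) (hX 2)))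
  have hq₃ : q₃.totalDegree ≤ k * 1 :=
    totalDegree_jacobiForm_le _ _ _ (hX 2) (hsub_one (hX 2))
  refine ⟨q₁ * q₂ * q₃, ?_, fun ⟨x, y, z⟩ hz hyz => ?_⟩
  · have h₁₂ := MvPolynomial.totalDegree_mul q₁ q₂
    have h₁₂₃ := MvPolynomial.totalDegree_mul (q₁ * q₂) q₃
    omega
  · rw [dubiner3_eq_jacobiForm_mul i j k hz hyz]
    simp [q₁, q₂, q₃, X, map_jacobiForm]

/-- On the interior of the reference tetrahedron `T³` the Dubiner function
`φ_{(i,j,k)}` agrees with a trivariate polynomial of total degree at most `i + j + k`. -/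
theorem dubiner3_is_polynomial (i j k : ℕ) :
    ∃ q : MvPolynomial (Fin 3) ℝ, q.totalDegree ≤ i + j + k ∧
      ∀ ξ : ℝ × ℝ × ℝ, 0 < ξ.1 → 0 < ξ.2.1 → 0 < ξ.2.2 → ξ.1 + ξ.2.1 + ξ.2.2 < 1 →
        MvPolynomial.eval ![ξ.1, ξ.2.1, ξ.2.2] q = dubiner3 i j k ξ := by
  obtain ⟨q, hdeg, hq⟩ := dubiner3_is_polynomial_general i j k
  exact ⟨q, hdeg, fun ξ _ _ _ _ => hq ξ (by linarith) (by linarith)⟩
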